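/- Let k ∈ [0,1) and let S be a weakly regular AG-groupoid with a left identity e. Then the following conditions are equivalent: (i) S is regular; (ii) f ∧_k g ≤ f ∘_k g for every (∈,∈∨q_k)-fuzzy quasi-ideal f and every (∈,∈∨q_k)-fuzzy left ideal g of S; (iii) f ∧_k g ≤ f ∘_k g for every (∈,∈∨q_k)-fuzzy bi-ideal f and every (∈,∈∨q_k)-fuzzy left ideal g of S; (iv) f ∧_k g ≤ f ∘_k g for every (∈,∈∨q_k)-fuzzy generalized bi-ideal f and every (∈,∈∨q_k)-fuzzy left ideal g of S. -/

import Mathlib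

/-- An AG-groupoid: a magma satisfying the left invertive law `(ab)c = (cb)a`. -/
def LeftInvertive (S : Type*) [Mul S] : Prop := ∀ a b c : S, a * b * c = c * b * a

/-- A fuzzy subset: a function into `[0,1]`. -/
def IsFuzzy {S : Type*} (f : S → ℝ) : Prop := ∀ x, 0 ≤ f x ∧ f x ≤ 1

/-- A weakly regular AG-groupoid: each `a` satisfies `a = (ax)(ay)` for some `x, y`. -/
def WeaklyRegular (S : Type*) [Mul S] : Prop := ∀ a : S, ∃ x y : S, a = a * x * (a * y)

/-- The product of fuzzy subsets: `(f ∘ g)(a)` is the supremum of `min(f b, g c)` over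
factorizations `a = b * c` (the empty supremum in `ℝ` is `0`). -/
noncomputable def fuzzyProd {S : Type*} [Mul S] (f g : S → ℝ) (a : S) : ℝ :=
  sSup {v : ℝ | ∃ b c : S, a = b * c ∧ v = min (f b) (g c)}

/-- The constant fuzzy subset `1`. -/
def fuzzyOne (S : Type*) : S → ℝ := fun _ => 1

/-- An `(∈,∈∨q_k)`-fuzzy left ideal of an AG-groupoid. -/
def FuzzyLeftIdealK {S : Type*} [Mul S] (k : ℝ) (f : S → ℝ) : Prop :=
  ∀ x y : S, min (f y) ((1 - k) / 2) ≤ f (x * y)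

/-- An `(∈,∈∨q_k)`-fuzzy right ideal of an AG-groupoid. -/
def FuzzyRightIdealK {S : Type*} [Mul S] (k : ℝ) (f : S → ℝ) : Prop :=
  ∀ x y : S, min (f x) ((1 - k) / 2) ≤ f (x * y)

/-- An `(∈,∈∨q_k)`-fuzzy generalized bi-ideal of an AG-groupoid. -/
def FuzzyGenBiIdealK {S : Type*} [Mul S] (k : ℝ) (f : S → ℝ) : Prop :=
  ∀ x y z : S, min (min (f x) (f z)) ((1 - k) / 2) ≤ f (x * y * z)

/-- An `(∈,∈∨q_k)`-fuzzy bi-ideal of an AG-groupoid. -/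
def FuzzyBiIdealK {S : Type*} [Mul S] (k : ℝ) (f : S → ℝ) : Prop :=
  (∀ x y : S, min (min (f x) (f y)) ((1 - k) / 2) ≤ f (x * y)) ∧
  FuzzyGenBiIdealK k f

/-- An `(∈,∈∨q_k)`-fuzzy quasi-ideal of an AG-groupoid. -/
def FuzzyQuasiIdealK {S : Type*} [Mul S] (k : ℝ) (f : S → ℝ) : Prop :=
  ∀ x : S,
    min (min (fuzzyProd f (fuzzyOne S) x) (fuzzyProd (fuzzyOne S) f x)) ((1 - k) / 2) ≤ f x

/-- `f_k`. -/
noncomputable def subK {S : Type*} (k : ℝ) (f : S → ℝ) : S → ℝ := fun a => min (f a) ((1 - k) / 2)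

/-- `f ∧_k g`. -/
noncomputable def andK {S : Type*} (k : ℝ) (f g : S → ℝ) : S → ℝ :=
  fun a => min (min (f a) (g a)) ((1 - k) / 2)

/-- `f ∘_k g`. -/
noncomputable def prodK {S : Type*} [Mul S] (k : ℝ) (f g : S → ℝ) : S → ℝ :=
  fun a => min (fuzzyProd f g a) ((1 - k) / 2)

/-- A regular AG-groupoid: each `a` satisfies `a = (ax)a` for some `x`. -/
def RegularAG (S : Type*) [Mul S] : Prop := ∀ a : S, ∃ x : S, a = a * x * a

/-- An intra-regular AG-groupoid: each `a` satisfies `a = (x(aa))y` for some `x, y`. -/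
def IntraRegularAG (S : Type*) [Mul S] : Prop :=
  ∀ a : S, ∃ x y : S, a = x * (a * a) * y

/-!
In an AG-groupoid `S` with a left identity, if `(aa)t = a`, then `t` commutes with `a`. The element
`at = ta` is then an idempotent with `(at)a = a`, so `a` is regular, and it lies both in `aS ∩ Sa`
and in `(aS)a`, since `at = (at)(at) = ((at)t)a`. Hence fuzzy quasi-ideals and fuzzy generalized
bi-ideals are at least as large at `at` as at `a`, up to the threshold `(1 - k) / 2`, and the
factorization `a = (at)a` bounds `f ∘ g` from below at `a`.
Weak regularity `a = (ax)(ay)` supplies `t = xy`, because `(ax)(ay) = (aa)(xy)`.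
-/

section AGGroupoid

variable {S : Type*} [Mul S] {e a t : S}

namespace LeftInvertive

theorem mul_mul_mul_comm (hS : LeftInvertive S) (a b c d : S) :
    a * b * (c * d) = a * c * (b * d) := by
  rw [hS a b, hS c d b, hS (b * d) c a]

theorem mul_left_comm (hS : LeftInvertive S) (he : ∀ x : S, e * x = x) (a b c : S) :
    a * (b * c) = b * (a * c) := by
  simpa only [he] using hS.mul_mul_mul_comm e a b c

theorem mul_self_mul_leftId (hS : LeftInvertive S) (he : ∀ x : S, e * x = x) (a : S) :
    a * a * e = a * a := by
  rw [hS a a e, he]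

theorem commute_mul_self_mul_self (hS : LeftInvertive S) (he : ∀ x : S, e * x = x) (a b : S) :
    Commute (a * a) (b * b) :=
  calc a * a * (b * b) = e * (a * a) * (b * b) := by rw [he]
    _ = b * b * (a * a) * e := hS e (a * a) (b * b)
    _ = b * a * (b * a) * e := by rw [hS.mul_mul_mul_comm b b a a]
    _ = b * a * (b * a) := hS.mul_self_mul_leftId he (b * a)
    _ = b * b * (a * a) := hS.mul_mul_mul_comm b a b a

theorem mul_mul_self_eq (hS : LeftInvertive S) (he : ∀ x : S, e * x = x) (a b : S) :
    a * b * a = b * (a * e * a) :=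
  calc a * b * a = e * a * b * a := by rw [he]
    _ = b * a * e * a := by rw [hS e a b]
    _ = a * e * (b * a) := hS (b * a) e a
    _ = b * (a * e * a) := hS.mul_left_comm he (a * e) b a

theorem commute_of_mul_self_mul_eq (hS : LeftInvertive S) (he : ∀ x : S, e * x = x)
    (ht : a * a * t = a) : Commute a t :=
  calc a * t = a * a * t * t := by rw [ht]
    _ = t * t * (a * a) := hS (a * a) t t
    _ = a * a * (t * t) := hS.commute_mul_self_mul_self he t a
    _ = t * (a * a * t) := hS.mul_left_comm he (a * a) t t
    _ = t * a := by rw [ht]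

theorem mul_mul_self_eq_self (hS : LeftInvertive S) (he : ∀ x : S, e * x = x)
    (ht : a * a * t = a) : a * t * a = a :=
  calc a * t * a = t * a * a := by rw [(hS.commute_of_mul_self_mul_eq he ht).eq]
    _ = a * a * t := hS t a a
    _ = a := ht

theorem isIdempotentElem_mul (hS : LeftInvertive S) (he : ∀ x : S, e * x = x)
    (ht : a * a * t = a) : IsIdempotentElem (a * t) :=
  calc a * t * (a * t) = t * a * (a * t) := by rw [(hS.commute_of_mul_self_mul_eq he ht).eq]
    _ = a * t * a * t := hS t a (a * t)
    _ = a * t := by rw [hS.mul_mul_self_eq_self he ht]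

theorem mul_eq_mul_mul_self (hS : LeftInvertive S) (he : ∀ x : S, e * x = x)
    (ht : a * a * t = a) : a * t = a * (t * e * t) * a :=
  calc a * t = a * t * (a * t) := (hS.isIdempotentElem_mul he ht).eq.symm
    _ = a * t * t * a := hS a t (a * t)
    _ = t * a * t * a := by rw [(hS.commute_of_mul_self_mul_eq he ht).eq]
    _ = a * (t * e * t) * a := by rw [hS.mul_mul_self_eq he t a]

end LeftInvertive

theorem WeaklyRegular.exists_mul_self_mul_eq (hwr : WeaklyRegular S) (hS : LeftInvertive S)
    (a : S) : ∃ t, a * a * t = a := by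
  obtain ⟨x, y, hxy⟩ := hwr a
  exact ⟨x * y, (hS.mul_mul_mul_comm a a x y).trans hxy.symm⟩

theorem WeaklyRegular.regularAG (hwr : WeaklyRegular S) (hS : LeftInvertive S)
    (he : ∀ x : S, e * x = x) : RegularAG S := fun a ↦
  let ⟨t, ht⟩ := hwr.exists_mul_self_mul_eq hS a
  ⟨t, (hS.mul_mul_self_eq_self he ht).symm⟩

end AGGroupoid

section FuzzySubset

variable {S : Type*} {f g : S → ℝ}

theorem IsFuzzy.bddAbove_range (hf : IsFuzzy f) : BddAbove (Set.range f) :=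
  ⟨1, Set.forall_mem_range.2 fun x ↦ (hf x).2⟩

theorem isFuzzy_fuzzyOne : IsFuzzy (fuzzyOne S) := fun _ ↦ ⟨zero_le_one, le_rfl⟩

variable [Mul S] {k : ℝ} {a b c t : S}

theorem min_le_fuzzyProd_mul (hf : BddAbove (Set.range f)) (b c : S) :
    min (f b) (g c) ≤ fuzzyProd f g (b * c) := by
  obtain ⟨M, hM⟩ := hf
  refine le_csSup ⟨M, ?_⟩ ⟨b, c, rfl, rfl⟩
  rintro _ ⟨x, y, -, rfl⟩
  exact (min_le_left _ _).trans (hM (Set.mem_range_self x))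

theorem andK_le_prodK_of_mul_eq (hf : BddAbove (Set.range f)) (hbc : b * c = a)
    (hb : min (f a) ((1 - k) / 2) ≤ f b) (hc : min (g a) ((1 - k) / 2) ≤ g c) :
    andK k f g a ≤ prodK k f g a := by
  subst hbc
  refine le_min ((le_min ?_ ?_).trans (min_le_fuzzyProd_mul hf b c)) (min_le_right _ _)
  · exact (min_le_min_right _ (min_le_left _ _)).trans hb
  · exact (min_le_min_right _ (min_le_right _ _)).trans hc

theorem FuzzyQuasiIdealK.min_le_mul_of_commute (hq : FuzzyQuasiIdealK k f) (hf : IsFuzzy f)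
    (hat : Commute a t) : min (f a) ((1 - k) / 2) ≤ f (a * t) := by
  have left_factor : f a ≤ fuzzyProd f (fuzzyOne S) (a * t) :=
    (le_min le_rfl (hf a).2).trans (min_le_fuzzyProd_mul (g := fuzzyOne S) hf.bddAbove_range a t)
  have right_factor : f a ≤ fuzzyProd (fuzzyOne S) f (a * t) := by
    rw [hat.eq]
    exact (le_min (hf a).2 le_rfl).trans
      (min_le_fuzzyProd_mul isFuzzy_fuzzyOne.bddAbove_range t a)
  exact (min_le_min_right _ (le_min left_factor right_factor)).trans (hq (a * t))

theorem FuzzyGenBiIdealK.min_le_mul_mul_self (hb : FuzzyGenBiIdealK k f) (a w : S) :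
    min (f a) ((1 - k) / 2) ≤ f (a * w * a) := by
  simpa only [min_self] using hb a w a

end FuzzySubset

theorem regular_tfae_andK_le_prodK_general {S : Type*} [Mul S] (hS : LeftInvertive S) (k : ℝ)
    (e : S) (he : ∀ x : S, e * x = x) (hwr : WeaklyRegular S) :
    RegularAG S ∧ ∀ f g : S → ℝ, IsFuzzy f → IsFuzzy g →
      FuzzyQuasiIdealK k f ∨ FuzzyGenBiIdealK k f → ∀ a : S, andK k f g a ≤ prodK k f g a := by
  refine ⟨hwr.regularAG hS he, fun f g hf _ hideal a ↦ ?_⟩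
  obtain ⟨t, ht⟩ := hwr.exists_mul_self_mul_eq hS a
  have le_at : min (f a) ((1 - k) / 2) ≤ f (a * t) := by
    rcases hideal with hquasi | hbi
    · exact hquasi.min_le_mul_of_commute hf (hS.commute_of_mul_self_mul_eq he ht)
    · rw [hS.mul_eq_mul_mul_self he ht]
      exact hbi.min_le_mul_mul_self a _
  exact andK_le_prodK_of_mul_eq hf.bddAbove_range (hS.mul_mul_self_eq_self he ht) le_at
    (min_le_left _ _)

/-- for a weakly regular AG-groupoid `S` with left identity, the following
are equivalent: (i) `S` is regular; (ii) `f ∧_k g ≤ f ∘_k g` for every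
`(∈,∈∨q_k)`-fuzzy quasi-ideal `f` and every `(∈,∈∨q_k)`-fuzzy left ideal `g`;
(iii) the same for every `(∈,∈∨q_k)`-fuzzy bi-ideal `f`; (iv) the same for every
`(∈,∈∨q_k)`-fuzzy generalized bi-ideal `f`. -/
theorem regular_tfae_andK_le_prodK {S : Type*} [Mul S] (hS : LeftInvertive S)
    (k : ℝ) (hk0 : 0 ≤ k) (hk1 : k < 1)
    (e : S) (he : ∀ x : S, e * x = x) (hwr : WeaklyRegular S) :
    (RegularAG S ↔
      ∀ f g : S → ℝ, IsFuzzy f → IsFuzzy g →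
        FuzzyQuasiIdealK k f → FuzzyLeftIdealK k g →
        ∀ a : S, andK k f g a ≤ prodK k f g a) ∧
    (RegularAG S ↔
      ∀ f g : S → ℝ, IsFuzzy f → IsFuzzy g →
        FuzzyBiIdealK k f → FuzzyLeftIdealK k g →
        ∀ a : S, andK k f g a ≤ prodK k f g a) ∧
    (RegularAG S ↔
      ∀ f g : S → ℝ, IsFuzzy f → IsFuzzy g →
        FuzzyGenBiIdealK k f → FuzzyLeftIdealK k g →
        ∀ a : S, andK k f g a ≤ prodK k f g a) := by
  obtain ⟨hreg, hle⟩ := regular_tfae_andK_le_prodK_general hS k e he hwr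
  exact ⟨⟨fun _ f g hf hg hq _ ↦ hle f g hf hg (.inl hq), fun _ ↦ hreg⟩,
    ⟨fun _ f g hf hg hb _ ↦ hle f g hf hg (.inr hb.2), fun _ ↦ hreg⟩,
    ⟨fun _ f g hf hg hb _ ↦ hle f g hf hg (.inr hb), fun _ ↦ hreg⟩⟩
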